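/- arXiv:1808.02991 — 2 statements merged into one kernel-verified Lean document; each statement's English description precedes it below -/
import Mathlib

section
/- Let L be a finite-dimensional Lie algebra over a field of characteristic different from 2 and 3 and let 0 → R → F →π L → 0 be a free presentation of L. Then for every stem denominator X of this presentation, the stem deformation 0 → R/X → F/X →π̄ L → 0 is a maximal stem extension of L, i.e. dim(R/X) ≥ dim S for every stem extension 0 → S → T → L → 0 of L. -/
/-!
Let `π : F → L` be surjective with kernel `R`, and let `γ : T → L` be a central extension. Brackets
in `T` depend only on images in `L`, so a lift `σ : F → T` of `π` kills `[R, F]` and maps `[F, F]`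
onto `[T, T]`. If moreover `γ` is a stem extension, `σ` therefore maps `R ∩ [F, F]` onto `ker γ`, so
that `ker γ` is a quotient of the Schur multiplier `(R ∩ [F, F]) / [R, F]`. Applied to the stem
deformation `T = F / X`, where the quotient map has kernel exactly `[R, F]` on `R ∩ [F, F]`, this
identifies `R / X` with the whole Schur multiplier.
-/

universe u

/-- The canonical quotient map `L → L ⧸ I` as a morphism of Lie algebras. -/
def LieIdeal.quotMk {R L : Type*} [CommRing R] [LieRing L] [LieAlgebra R L]
    (I : LieIdeal R L) : L →ₗ⁅R⁆ L ⧸ I :=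
  { I.toSubmodule.mkQ with map_lie' := fun {_ _} => rfl }

/-- A stem extension of the Lie algebra `L` over the field `K`:
a surjective Lie algebra homomorphism `γ : T → L` whose kernel is contained in
the center of `T` and in the derived subalgebra `[T,T]`. -/
structure StemExtension (K L : Type u) [Field K] [LieRing L] [LieAlgebra K L] where
  T : Type u
  [instLieRing : LieRing T]
  [instLieAlgebra : LieAlgebra K T]
  γ : T →ₗ⁅K⁆ L
  surj : Function.Surjective γ
  central : γ.ker ≤ LieAlgebra.center K T
  stem : γ.ker ≤ LieAlgebra.derivedSeries K T 1

attribute [instance] StemExtension.instLieRing StemExtension.instLieAlgebra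

section Rank

open Cardinal

universe v v'

variable {R M : Type*} {M' : Type v} {M'' : Type v'} [Ring R] [AddCommGroup M] [Module R M]
  [AddCommGroup M'] [Module R M'] [AddCommGroup M''] [Module R M'']

theorem lift_rank_range_le_of_ker_le {f : M →ₗ[R] M'} {g : M →ₗ[R] M''} (h : g.ker ≤ f.ker) :
    lift.{v'} (Module.rank R f.range) ≤ lift.{v} (Module.rank R g.range) := by
  let φ : g.range →ₗ[R] M' := g.ker.liftQ f h ∘ₗ g.quotKerEquivRange.symm
  have hφ : φ.range = f.range := by
    rw [LinearMap.range_comp_of_range_eq_top _ (LinearEquiv.range _), Submodule.range_liftQ]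
  exact hφ ▸ lift_rank_range_le φ

theorem lift_rank_map_le_of_inf_ker_le {f : M →ₗ[R] M'} {g : M →ₗ[R] M''} {N : Submodule R M}
    (h : N ⊓ g.ker ≤ f.ker) :
    lift.{v'} (Module.rank R (N.map f)) ≤ lift.{v} (Module.rank R (N.map g)) := by
  rw [← LinearMap.range_domRestrict, ← LinearMap.range_domRestrict]
  exact lift_rank_range_le_of_ker_le fun x hx ↦ h ⟨x.2, hx⟩

end Rank

section LieHom

variable {R F T L : Type*} [CommRing R] [LieRing F] [LieAlgebra R F] [LieRing T] [LieAlgebra R T]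
  [LieRing L] [LieAlgebra R L] {γ : T →ₗ⁅R⁆ L} {σ : F →ₗ⁅R⁆ T}

theorem lieIdeal_map_ker_comp_of_surjective (hσ : Function.Surjective σ) (γ : T →ₗ⁅R⁆ L) :
    LieIdeal.map σ (γ.comp σ).ker = γ.ker := by
  change LieIdeal.map σ (LieIdeal.comap σ γ.ker) = γ.ker
  rw [LieIdeal.map_comap_eq (σ.isIdealMorphism_of_surjective hσ),
    σ.idealRange_eq_top_of_surjective hσ, top_inf_eq]

theorem lieIdeal_map_le_center_iff (hσ : Function.Surjective σ) {I : LieIdeal R F} :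
    LieIdeal.map σ I ≤ LieAlgebra.center R T ↔ ⁅I, (⊤ : LieIdeal R F)⁆ ≤ σ.ker := by
  rw [LieModule.le_max_triv_iff_bracket_eq_bot, ← σ.idealRange_eq_top_of_surjective hσ,
    LieHom.idealRange_eq_map, ← LieIdeal.map_bracket_eq σ hσ, LieIdeal.map_eq_bot_iff,
    LieSubmodule.lie_comm]

theorem lieIdeal_map_le_derivedSeries (hσ : Function.Surjective σ) {I : LieIdeal R F} {k : ℕ}
    (hI : I ≤ LieAlgebra.derivedSeries R F k ⊔ σ.ker) :
    LieIdeal.map σ I ≤ LieAlgebra.derivedSeries R T k := by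
  calc
    LieIdeal.map σ I ≤ LieIdeal.map σ (LieAlgebra.derivedSeries R F k ⊔ σ.ker) :=
      LieIdeal.map_mono hI
    _ = LieAlgebra.derivedSeries R T k := by
      rw [LieIdeal.map_sup_ker_eq_map, LieIdeal.derivedSeries_map_eq k hσ]

theorem lie_eq_lie_of_map_eq (hγ : γ.ker ≤ LieAlgebra.center R T) {a a' b b' : T}
    (ha : γ a = γ a') (hb : γ b = γ b') : ⁅a, b⁆ = ⁅a', b'⁆ := by
  have central {z : T} (hz : γ z = 0) (t : T) : ⁅t, z⁆ = 0 := hγ (LieHom.mem_ker.2 hz) t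
  have ha' : ⁅b, a - a'⁆ = 0 := central (by rw [map_sub, ha, sub_self]) b
  have hb' : ⁅a', b - b'⁆ = 0 := central (by rw [map_sub, hb, sub_self]) a'
  calc
    ⁅a, b⁆ = ⁅a', b⁆ := by
      rw [← lie_skew, ← lie_skew a', neg_inj, ← sub_eq_zero, ← lie_sub, ha']
    _ = ⁅a', b'⁆ := by rw [← sub_eq_zero, ← lie_sub, hb']

theorem lie_ker_comp_le_ker (hγ : γ.ker ≤ LieAlgebra.center R T) (σ : F →ₗ⁅R⁆ T) :
    ⁅(γ.comp σ).ker, (⊤ : LieIdeal R F)⁆ ≤ σ.ker := by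
  refine (LieSubmodule.lie_le_iff ..).2 fun x hx y _ ↦ ?_
  have hσx : γ (σ x) = γ 0 := by rw [map_zero]; exact hx
  rw [LieHom.mem_ker, LieHom.map_lie, lie_eq_lie_of_map_eq hγ hσx rfl, zero_lie]

theorem derivedSeries_one_le_map (hγ : γ.ker ≤ LieAlgebra.center R T)
    (hσ : Function.Surjective (γ.comp σ)) :
    (LieAlgebra.derivedSeries R T 1).toSubmodule ≤
      (LieAlgebra.derivedSeries R F 1).toSubmodule.map (σ : F →ₗ[R] T) := by
  change (⁅(⊤ : LieIdeal R T), (⊤ : LieIdeal R T)⁆ : LieIdeal R T).toSubmodule ≤ _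
  rw [LieSubmodule.lieIdeal_oper_eq_linear_span', Submodule.span_le]
  rintro _ ⟨a, -, b, -, rfl⟩
  obtain ⟨x, hx⟩ := hσ (γ a)
  obtain ⟨y, hy⟩ := hσ (γ b)
  refine ⟨⁅x, y⁆, LieSubmodule.lie_mem_lie (LieSubmodule.mem_top x) (LieSubmodule.mem_top y), ?_⟩
  exact (σ.map_lie x y).trans (lie_eq_lie_of_map_eq hγ hx hy)

theorem ker_toSubmodule_eq_map_ker_inf_derivedSeries (hcentral : γ.ker ≤ LieAlgebra.center R T)
    (hstem : γ.ker ≤ LieAlgebra.derivedSeries R T 1) (hσ : Function.Surjective (γ.comp σ)) :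
    γ.ker.toSubmodule =
      ((γ.comp σ).ker ⊓ LieAlgebra.derivedSeries R F 1).toSubmodule.map (σ : F →ₗ[R] T) := by
  refine le_antisymm (fun t ht ↦ ?_) ?_
  · obtain ⟨x, hx, rfl⟩ := derivedSeries_one_le_map hcentral hσ (hstem ht)
    exact ⟨x, ⟨ht, hx⟩, rfl⟩
  · rintro _ ⟨x, hx, rfl⟩
    exact hx.1

theorem freeLieAlgebra_exists_comp_eq (hγ : Function.Surjective γ) {ι : Type*}
    (π : FreeLieAlgebra R ι →ₗ⁅R⁆ L) : ∃ σ : FreeLieAlgebra R ι →ₗ⁅R⁆ T, γ.comp σ = π := by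
  choose s hs using hγ
  refine ⟨FreeLieAlgebra.lift R fun i ↦ s (π (FreeLieAlgebra.of R i)), ?_⟩
  ext i
  simp [hs]

end LieHom

section Quotient

variable {R F L : Type*} [CommRing R] [LieRing F] [LieAlgebra R F] [LieRing L] [LieAlgebra R L]

theorem quotMk_surjective (X : LieIdeal R F) : Function.Surjective X.quotMk :=
  X.toSubmodule.mkQ_surjective

theorem ker_quotMk (X : LieIdeal R F) : X.quotMk.ker = X := by
  ext x
  exact Submodule.Quotient.mk_eq_zero X.toSubmodule

/-- The homomorphism `F ⧸ X → L` induced by a homomorphism `π : F → L` of Lie algebras that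
vanishes on the ideal `X`. -/
def lieQuotientLift (X : LieIdeal R F) (π : F →ₗ⁅R⁆ L) (h : X ≤ π.ker) : F ⧸ X →ₗ⁅R⁆ L :=
  { X.toSubmodule.liftQ (π : F →ₗ[R] L) h with
    map_lie' := by
      rintro ⟨x⟩ ⟨y⟩
      exact π.map_lie x y }

theorem lieQuotientLift_comp_quotMk (X : LieIdeal R F) (π : F →ₗ⁅R⁆ L) (h : X ≤ π.ker) :
    (lieQuotientLift X π h).comp X.quotMk = π :=
  rfl

end Quotient

/-- An ideal `X` of `F` is a stem denominator of the presentation `π : F → L`, with kernel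
`R = π.ker`, if `[R, F] ⊆ X ⊆ R`, `R = (R ∩ [F, F]) + X` and `[F, F] ∩ X = [R, F]`. The Lie algebra
`F` need not be free. -/
structure IsStemDenominator {K F L : Type*} [CommRing K] [LieRing F] [LieAlgebra K F] [LieRing L]
    [LieAlgebra K L] (π : F →ₗ⁅K⁆ L) (X : LieIdeal K F) : Prop where
  lie_le : ⁅π.ker, (⊤ : LieIdeal K F)⁆ ≤ X
  le_ker : X ≤ π.ker
  ker_eq_sup : π.ker = (π.ker ⊓ LieAlgebra.derivedSeries K F 1) ⊔ X
  inf_eq_lie : LieAlgebra.derivedSeries K F 1 ⊓ X = ⁅π.ker, (⊤ : LieIdeal K F)⁆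

section StemExtension

variable {K L : Type u} [Field K] [LieRing L] [LieAlgebra K L]

theorem StemExtension.rank_ker_le_of_comp_eq (E E' : StemExtension K L)
    {F : Type*} [LieRing F] [LieAlgebra K F] {σ : F →ₗ⁅K⁆ E.T} {σ' : F →ₗ⁅K⁆ E'.T}
    (hσσ' : E.γ.comp σ = E'.γ.comp σ') (hσ : Function.Surjective (E.γ.comp σ))
    (hσ' : LieAlgebra.derivedSeries K F 1 ⊓ σ'.ker ≤ ⁅(E'.γ.comp σ').ker, (⊤ : LieIdeal K F)⁆) :
    Module.rank K E.γ.ker ≤ Module.rank K E'.γ.ker := by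
  have hker : (E.γ.comp σ).ker ⊓ LieAlgebra.derivedSeries K F 1 ⊓ σ'.ker ≤ σ.ker :=
    calc
      _ ≤ LieAlgebra.derivedSeries K F 1 ⊓ σ'.ker := inf_le_inf_right _ inf_le_right
      _ ≤ ⁅(E.γ.comp σ).ker, (⊤ : LieIdeal K F)⁆ := hσσ' ▸ hσ'
      _ ≤ σ.ker := lie_ker_comp_le_ker E.central σ
  have hE := ker_toSubmodule_eq_map_ker_inf_derivedSeries E.central E.stem hσ
  have hE' := ker_toSubmodule_eq_map_ker_inf_derivedSeries E'.central E'.stem (hσσ' ▸ hσ)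
  change Module.rank K E.γ.ker.toSubmodule ≤ Module.rank K E'.γ.ker.toSubmodule
  rw [hE, hE', ← hσσ']
  simpa only [Cardinal.lift_id] using lift_rank_map_le_of_inf_ker_le (f := (σ : F →ₗ[K] E.T))
    (g := (σ' : F →ₗ[K] E'.T)) hker

namespace IsStemDenominator

variable {F : Type u} [LieRing F] [LieAlgebra K F] {π : F →ₗ⁅K⁆ L} {X : LieIdeal K F}

/-- The stem deformation `F ⧸ X → L` of a surjective presentation `π : F → L` at a stem denominator
`X`, as a stem extension of `L`. -/
def stemDeformation (hX : IsStemDenominator π X) (hπ : Function.Surjective π) :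
    StemExtension K L where
  T := F ⧸ X
  γ := lieQuotientLift X π hX.le_ker
  surj := Function.Surjective.of_comp (g := X.quotMk) hπ
  central := by
    rw [← lieIdeal_map_ker_comp_of_surjective (quotMk_surjective X),
      lieIdeal_map_le_center_iff (quotMk_surjective X), ker_quotMk]
    exact hX.lie_le
  stem := by
    rw [← lieIdeal_map_ker_comp_of_surjective (quotMk_surjective X), lieQuotientLift_comp_quotMk]
    refine lieIdeal_map_le_derivedSeries (quotMk_surjective X) ?_
    rw [ker_quotMk, hX.ker_eq_sup]
    exact sup_le_sup_right inf_le_right X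

theorem ker_stemDeformation (hX : IsStemDenominator π X) (hπ : Function.Surjective π) :
    (hX.stemDeformation hπ).γ.ker = LieIdeal.map X.quotMk π.ker :=
  (lieIdeal_map_ker_comp_of_surjective (quotMk_surjective X) _).symm

theorem rank_ker_le (hX : IsStemDenominator π X) (hπ : Function.Surjective π)
    (E : StemExtension K L) {σ : F →ₗ⁅K⁆ E.T} (hσ : E.γ.comp σ = π) :
    Module.rank K E.γ.ker ≤ Module.rank K (hX.stemDeformation hπ).γ.ker := by
  refine E.rank_ker_le_of_comp_eq (hX.stemDeformation hπ) (σ := σ) (σ' := X.quotMk) hσ (hσ ▸ hπ) ?_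
  exact (ker_quotMk X).symm ▸ hX.inf_eq_lie.le

end IsStemDenominator

theorem stmt_10_general {ι : Type u} {π : FreeLieAlgebra K ι →ₗ⁅K⁆ L} (hπ : Function.Surjective π)
    {X : LieIdeal K (FreeLieAlgebra K ι)} (hX : IsStemDenominator π X) :
    ∃ πbar : FreeLieAlgebra K ι ⧸ X →ₗ⁅K⁆ L,
      πbar.comp X.quotMk = π ∧
      Function.Surjective πbar ∧
      πbar.ker = LieIdeal.map X.quotMk π.ker ∧
      LieIdeal.map X.quotMk π.ker ≤ LieAlgebra.center K (FreeLieAlgebra K ι ⧸ X) ∧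
      LieIdeal.map X.quotMk π.ker ≤ LieAlgebra.derivedSeries K (FreeLieAlgebra K ι ⧸ X) 1 ∧
      ∀ E : StemExtension K L,
        Module.rank K E.γ.ker ≤ Module.rank K (LieIdeal.map X.quotMk π.ker) := by
  have hker := hX.ker_stemDeformation hπ
  refine ⟨(hX.stemDeformation hπ).γ, lieQuotientLift_comp_quotMk X π hX.le_ker,
    (hX.stemDeformation hπ).surj, hker, hker ▸ (hX.stemDeformation hπ).central,
    hker ▸ (hX.stemDeformation hπ).stem, fun E ↦ ?_⟩
  obtain ⟨σ, hσ⟩ := freeLieAlgebra_exists_comp_eq E.surj π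
  exact hker ▸ hX.rank_ker_le hπ E hσ

end StemExtension

/-- **Theorem 2.8, one direction, purely even case.**
Let `L` be a finite-dimensional Lie algebra over a field of characteristic
different from `2` and `3` and let `0 → R → F → L → 0` be a free presentation
of `L`.  Then for every stem denominator `X` of this presentation, the stem
deformation `0 → R/X → F/X → L → 0` is a maximal stem extension of `L`:
it is a stem extension, and `dim S ≤ dim (R/X)` for every stem extension
`0 → S → T → L → 0` of `L`. -/
theorem stmt_10 (K : Type u) [Field K] (h2 : (2 : K) ≠ 0) (h3 : (3 : K) ≠ 0)
    (L : Type u) [LieRing L] [LieAlgebra K L] [FiniteDimensional K L]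
    (ι : Type u)
    (π : FreeLieAlgebra K ι →ₗ⁅K⁆ L) (hπ : Function.Surjective π)
    (R : LieIdeal K (FreeLieAlgebra K ι)) (hR : π.ker = R)
    (X : LieIdeal K (FreeLieAlgebra K ι))
    (hXlow : ⁅R, (⊤ : LieIdeal K (FreeLieAlgebra K ι))⁆ ≤ X) (hXhigh : X ≤ R)
    (hsum : R = (R ⊓ LieAlgebra.derivedSeries K (FreeLieAlgebra K ι) 1) ⊔ X)
    (hint : LieAlgebra.derivedSeries K (FreeLieAlgebra K ι) 1 ⊓ X =
      ⁅R, (⊤ : LieIdeal K (FreeLieAlgebra K ι))⁆) :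
    ∃ πbar : FreeLieAlgebra K ι ⧸ X →ₗ⁅K⁆ L,
      πbar.comp X.quotMk = π ∧
      Function.Surjective πbar ∧
      πbar.ker = LieIdeal.map X.quotMk R ∧
      LieIdeal.map X.quotMk R ≤ LieAlgebra.center K (FreeLieAlgebra K ι ⧸ X) ∧
      LieIdeal.map X.quotMk R ≤
        LieAlgebra.derivedSeries K (FreeLieAlgebra K ι ⧸ X) 1 ∧
      ∀ E : StemExtension K L,
        Module.rank K E.γ.ker ≤ Module.rank K (LieIdeal.map X.quotMk R) := by
  subst hR
  exact stmt_10_general hπ ⟨hXlow, hXhigh, hsum, hint⟩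
end

section
/- Let L be a finite-dimensional Lie algebra over a field of characteristic different from 2 and 3 and let 0 → R → F →π L → 0 be a free presentation of L. Then every maximal stem extension 0 → M → C →γ L → 0 of L is isomorphic as an extension to a stem deformation of this free presentation: there exist a stem denominator X of the presentation and a Lie algebra isomorphism f : F/X → C with γ ∘ f = π̄. -/
universe u

/-!
A homomorphism `σ : F → T` that composes with a central extension `γ : T → L` to a surjection maps
`[F, F]` onto `[T, T]`, since brackets in `T` only depend on classes modulo the centre. For a stem
extension this makes `σ` surjective, and it maps `R ∩ [F, F]` onto `ker γ`, where `R = ker (γ ∘ σ)`.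
As `[R, F] ≤ ker σ`, the kernel of `γ` is thus a quotient of `(R ∩ [F, F]) / [R, F]`. When `F` is
free such a `σ` exists for every stem extension, and stem deformations attain the bound, so a
finite-dimensional kernel of maximal dimension forces `[F, F] ∩ ker σ = [R, F]`. Hence `ker σ` is a
stem denominator and `F / ker σ ≃ T`. If `L` is finite-dimensional, then so is `ker γ`, because
`[T, T]` is spanned by the brackets of lifts of a basis of `L`.
-/

section LinearAlgebra

theorem range_sup_ker_eq_top_of_surjective_comp {R M₁ M₂ M₃ : Type*} [Ring R] [AddCommGroup M₁]
    [Module R M₁] [AddCommGroup M₂] [Module R M₂] [AddCommGroup M₃] [Module R M₃]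
    {f : M₂ →ₗ[R] M₃} {g : M₁ →ₗ[R] M₂} (h : Function.Surjective (f ∘ₗ g)) :
    LinearMap.range g ⊔ LinearMap.ker f = ⊤ := by
  have hf : LinearMap.range f = ⊤ :=
    LinearMap.range_eq_top.2 (Function.Surjective.of_comp h)
  rw [← LinearMap.map_eq_top_iff hf, ← LinearMap.range_comp, LinearMap.range_eq_top.2 h]

variable {K V M N : Type*} [DivisionRing K] [AddCommGroup V] [Module K V] [AddCommGroup M]
  [Module K M] [AddCommGroup N] [Module K N]

theorem ker_eq_ker_of_finrank_range_le (f : V →ₗ[K] M) (g : V →ₗ[K] N)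
    [FiniteDimensional K (LinearMap.range g)] (hker : LinearMap.ker g ≤ LinearMap.ker f)
    (hrank : Module.finrank K (LinearMap.range g) ≤ Module.finrank K (LinearMap.range f)) :
    LinearMap.ker g = LinearMap.ker f := by
  have : FiniteDimensional K (V ⧸ LinearMap.ker g) := .equiv g.quotKerEquivRange.symm
  have hsurj := Submodule.factor_surjective hker
  have : FiniteDimensional K (V ⧸ LinearMap.ker f) := .of_surjective _ hsurj
  have hfinrank : Module.finrank K (V ⧸ LinearMap.ker g) =
      Module.finrank K (V ⧸ LinearMap.ker f) := by
    refine le_antisymm ?_ (LinearMap.finrank_le_finrank_of_surjective hsurj)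
    rwa [g.quotKerEquivRange.finrank_eq, f.quotKerEquivRange.finrank_eq]
  have hinj := (LinearMap.injective_iff_surjective_of_finrank_eq_finrank hfinrank).2 hsurj
  refine hker.antisymm fun x hx => ?_
  rw [← Submodule.Quotient.mk_eq_zero] at hx ⊢
  exact hinj (hx.trans (map_zero _).symm)

theorem inf_ker_eq_inf_ker_of_finrank_map_le (f : V →ₗ[K] M) (g : V →ₗ[K] N) (C : Submodule K V)
    [FiniteDimensional K (C.map g)] (hker : C ⊓ LinearMap.ker g ≤ LinearMap.ker f)
    (hrank : Module.finrank K (C.map g) ≤ Module.finrank K (C.map f)) :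
    C ⊓ LinearMap.ker g = C ⊓ LinearMap.ker f := by
  have hfin : FiniteDimensional K (LinearMap.range (g.domRestrict C)) := by
    rwa [LinearMap.range_domRestrict]
  have h := ker_eq_ker_of_finrank_range_le (f.domRestrict C) (g.domRestrict C)
    (fun x hx => hker ⟨x.2, hx⟩)
    (by rwa [LinearMap.range_domRestrict, LinearMap.range_domRestrict])
  simpa only [LinearMap.ker_domRestrict, Submodule.map_comap_subtype] using
    congrArg (Submodule.map C.subtype) h

end LinearAlgebra

section CentralExtension

variable {R F T L : Type*} [CommRing R] [LieRing F] [LieAlgebra R F] [LieRing T] [LieAlgebra R T]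
  [LieRing L] [LieAlgebra R L]

theorem lie_mem_derivedSeries_one (x y : T) : ⁅x, y⁆ ∈ LieAlgebra.derivedSeries R T 1 :=
  LieSubmodule.lie_mem_lie (LieSubmodule.mem_top x) (LieSubmodule.mem_top y)

theorem derivedSeries_one_eq_map₂_of_sup_center_eq_top {N : Submodule R T}
    (hN : N ⊔ (LieAlgebra.center R T).toSubmodule = ⊤) :
    (LieAlgebra.derivedSeries R T 1).toSubmodule =
      Submodule.map₂ (LieAlgebra.ad R T : T →ₗ[R] T →ₗ[R] T) N N := by
  refine le_antisymm ?_ (Submodule.map₂_le.2 fun x _ y _ => lie_mem_derivedSeries_one x y)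
  refine (LieAlgebra.coe_derivedSeries_one_eq R T).trans_le (Submodule.span_le.2 ?_)
  rintro _ ⟨x, y, rfl⟩
  obtain ⟨a, ha, z, hz, rfl⟩ := Submodule.mem_sup.1 (hN ▸ Submodule.mem_top : x ∈ N ⊔ _)
  obtain ⟨b, hb, w, hw, rfl⟩ := Submodule.mem_sup.1 (hN ▸ Submodule.mem_top : y ∈ N ⊔ _)
  have hzb : ⁅z, b⁆ = 0 := by rw [← lie_skew, hz b, neg_zero]
  have hlie : ⁅a + z, b + w⁆ = ⁅a, b⁆ := by rw [lie_add, hw, add_lie, hzb, add_zero, add_zero]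
  exact hlie ▸ Submodule.apply_mem_map₂ _ ha hb

theorem map_derivedSeries_one_of_range_sup_center_eq_top (σ : F →ₗ⁅R⁆ T)
    (hσ : LinearMap.range (σ : F →ₗ[R] T) ⊔ (LieAlgebra.center R T).toSubmodule = ⊤) :
    (LieAlgebra.derivedSeries R F 1).toSubmodule.map (σ : F →ₗ[R] T) =
      (LieAlgebra.derivedSeries R T 1).toSubmodule := by
  rw [derivedSeries_one_eq_map₂_of_sup_center_eq_top hσ,
    derivedSeries_one_eq_map₂_of_sup_center_eq_top (N := ⊤) (top_sup_eq _), Submodule.map_map₂,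
    LinearMap.range_eq_map, Submodule.map₂_map_map]
  congr 1
  ext x y
  exact σ.map_lie x y

theorem range_sup_center_eq_top_of_surjective_comp {M : Type*} [AddCommGroup M] [Module R M]
    {γ : T →ₗ⁅R⁆ L} (hcentral : γ.ker ≤ LieAlgebra.center R T) {s : M →ₗ[R] T}
    (hs : Function.Surjective ((γ : T →ₗ[R] L) ∘ₗ s)) :
    LinearMap.range s ⊔ (LieAlgebra.center R T).toSubmodule = ⊤ := by
  have hker : LinearMap.ker (γ : T →ₗ[R] L) ≤ (LieAlgebra.center R T).toSubmodule := hcentral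
  exact eq_top_mono (sup_le_sup_left hker _) (range_sup_ker_eq_top_of_surjective_comp hs)

theorem derivedSeries_one_fg_of_ker_le_center [Module.Finite R L] {γ : T →ₗ⁅R⁆ L}
    (hγ : Function.Surjective γ) (hcentral : γ.ker ≤ LieAlgebra.center R T) :
    (LieAlgebra.derivedSeries R T 1).toSubmodule.FG := by
  obtain ⟨n, f, hf⟩ := Module.Finite.exists_fin' R L
  obtain ⟨s, hs⟩ := Module.projective_lifting_property (γ : T →ₗ[R] L) f hγ
  have hcenter := range_sup_center_eq_top_of_surjective_comp hcentral (s := s) (by rwa [hs])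
  have hfg : (LinearMap.range s).FG := Module.Finite.iff_fg.1 inferInstance
  rw [derivedSeries_one_eq_map₂_of_sup_center_eq_top hcenter]
  exact hfg.map₂ _ hfg

theorem lie_top_le_ker_of_ker_le_center {γ : T →ₗ⁅R⁆ L} (hcentral : γ.ker ≤ LieAlgebra.center R T)
    (σ : F →ₗ⁅R⁆ T) : ⁅(γ.comp σ).ker, (⊤ : LieIdeal R F)⁆ ≤ σ.ker := by
  refine (LieSubmodule.lie_le_iff _ _ _).2 fun x hx y _ => ?_
  have hσx : σ x ∈ LieAlgebra.center R T := hcentral hx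
  rw [LieHom.mem_ker, LieHom.map_lie, ← lie_skew, hσx (σ y), neg_zero]

/-- The homomorphism `F ⧸ X → L` induced by a Lie algebra homomorphism `F → L` that vanishes on
the ideal `X`. -/
def quotientLieLift (π : F →ₗ⁅R⁆ L) (X : LieIdeal R F) (hX : X ≤ π.ker) : F ⧸ X →ₗ⁅R⁆ L :=
  { X.toSubmodule.liftQ (π : F →ₗ[R] L) hX with
    map_lie' := by
      rintro ⟨x⟩ ⟨y⟩
      exact π.map_lie x y }

theorem exists_freeLieAlgebra_lift {ι : Type*} {γ : T →ₗ⁅R⁆ L} (hγ : Function.Surjective γ)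
    (π : FreeLieAlgebra R ι →ₗ⁅R⁆ L) : ∃ σ : FreeLieAlgebra R ι →ₗ⁅R⁆ T, γ.comp σ = π := by
  refine ⟨FreeLieAlgebra.lift R fun i =>
    Function.surjInv hγ (π (FreeLieAlgebra.of R i)), FreeLieAlgebra.hom_ext ?_⟩
  intro i
  rw [LieHom.comp_apply, FreeLieAlgebra.lift_of_apply, Function.surjInv_eq hγ]

end CentralExtension

/-- A stem denominator `X` of a presentation `0 → R → F → L → 0`; it depends only on the ideal
`R` of `F`. The ideal `⁅R, ⊤⁆` is `[R, F]` and `derivedSeries K F 1` is `[F, F]`. The condition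
`[R, F] ≤ X` is part of `inf_eq`. -/
structure IsStemDenominator_s11 {K F : Type*} [CommRing K] [LieRing F] [LieAlgebra K F]
    (R X : LieIdeal K F) : Prop where
  le : X ≤ R
  eq_sup : R = (R ⊓ LieAlgebra.derivedSeries K F 1) ⊔ X
  inf_eq : LieAlgebra.derivedSeries K F 1 ⊓ X = ⁅R, (⊤ : LieIdeal K F)⁆

theorem IsStemDenominator_s11.lie_top_le {K F : Type*} [CommRing K] [LieRing F] [LieAlgebra K F]
    {R X : LieIdeal K F} (h : IsStemDenominator_s11 R X) : ⁅R, (⊤ : LieIdeal K F)⁆ ≤ X :=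
  h.inf_eq.ge.trans inf_le_right

theorem exists_isStemDenominator {K F : Type*} [Field K] [LieRing F] [LieAlgebra K F]
    (R : LieIdeal K F) : ∃ X : LieIdeal K F, IsStemDenominator_s11 R X := by
  have hle : ⁅R, (⊤ : LieIdeal K F)⁆ ≤ R ⊓ LieAlgebra.derivedSeries K F 1 :=
    le_inf (LieSubmodule.lie_le_left _ _) (LieSubmodule.mono_lie_left _ le_top)
  obtain ⟨Y, hinf, hsup⟩ := IsModularLattice.exists_inf_eq_and_sup_eq
    ((LieSubmodule.toSubmodule_le_toSubmodule _ _).2 hle)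
    ((LieSubmodule.toSubmodule_le_toSubmodule _ _).2 (inf_le_left : R ⊓ _ ≤ R))
  have hYR : Y ≤ R.toSubmodule := le_sup_right.trans hsup.le
  let X : LieIdeal K F :=
    { Y with
      lie_mem := fun {x y} hy => by
        have hyx : ⁅y, x⁆ ∈ ⁅R, (⊤ : LieIdeal K F)⁆ :=
          LieSubmodule.lie_mem_lie (hYR hy) (LieSubmodule.mem_top x)
        exact lie_skew x y ▸ (hinf.ge.trans inf_le_right) (neg_mem hyx) }
  have hXR : X ≤ R := hYR
  refine ⟨X, hXR, ?_, ?_⟩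
  · rw [← LieSubmodule.toSubmodule_inj, LieSubmodule.sup_toSubmodule]
    exact hsup.symm
  · rw [← inf_eq_right.2 hXR, ← inf_assoc, inf_comm _ R, ← LieSubmodule.toSubmodule_inj]
    exact hinf

namespace StemExtension

universe v

variable {K L : Type v} [Field K] [LieRing L] [LieAlgebra K L]

section Lift

variable (E : StemExtension K L) {F : Type*} [LieRing F] [LieAlgebra K F] {σ : F →ₗ⁅K⁆ E.T}

theorem map_derivedSeries_one_of_surjective_comp (hσ : Function.Surjective (E.γ.comp σ)) :
    (LieAlgebra.derivedSeries K F 1).toSubmodule.map (σ : F →ₗ[K] E.T) =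
      (LieAlgebra.derivedSeries K E.T 1).toSubmodule :=
  map_derivedSeries_one_of_range_sup_center_eq_top σ
    (range_sup_center_eq_top_of_surjective_comp E.central hσ)

theorem map_ker_comp_inf_derivedSeries_one (hσ : Function.Surjective (E.γ.comp σ)) :
    ((E.γ.comp σ).ker ⊓ LieAlgebra.derivedSeries K F 1).toSubmodule.map (σ : F →ₗ[K] E.T) =
      E.γ.ker.toSubmodule := by
  refine le_antisymm (Submodule.map_le_iff_le_comap.2 fun x hx => LieHom.mem_ker.1 hx.1)
    fun t ht => ?_
  obtain ⟨a, ha, rfl⟩ := (E.map_derivedSeries_one_of_surjective_comp hσ).ge (E.stem ht)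
  exact ⟨a, ⟨ht, ha⟩, rfl⟩

theorem surjective_of_surjective_comp (hσ : Function.Surjective (E.γ.comp σ)) :
    Function.Surjective σ := by
  have hker : LinearMap.ker (E.γ : E.T →ₗ[K] L) ≤ LinearMap.range (σ : F →ₗ[K] E.T) :=
    (E.map_ker_comp_inf_derivedSeries_one hσ).ge.trans LinearMap.map_le_range
  refine LinearMap.range_eq_top.1 ?_
  rw [← sup_eq_left.2 hker]
  exact range_sup_ker_eq_top_of_surjective_comp hσ

end Lift

theorem finiteDimensional_ker (E : StemExtension K L) [FiniteDimensional K L] :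
    FiniteDimensional K E.γ.ker :=
  have : FiniteDimensional K (LieAlgebra.derivedSeries K E.T 1).toSubmodule :=
    Module.Finite.iff_fg.2 (derivedSeries_one_fg_of_ker_le_center E.surj E.central)
  Submodule.finiteDimensional_of_le E.stem

/-- The stem deformation `F ⧸ X → L` of a presentation `π : F → L` given by a stem denominator
`X`. -/
def ofStemDenominator {F : Type v} [LieRing F] [LieAlgebra K F] {π : F →ₗ⁅K⁆ L}
    (hπ : Function.Surjective π) {X : LieIdeal K F} (hX : IsStemDenominator_s11 π.ker X) :
    StemExtension K L where
  T := F ⧸ X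
  γ := quotientLieLift π X hX.le
  surj l := (hπ l).imp' X.quotMk fun _ h => h
  central := by
    rintro ⟨r⟩ hr ⟨b⟩
    have hrb : ⁅b, r⁆ ∈ X := by
      rw [← lie_skew]
      exact neg_mem (hX.lie_top_le (LieSubmodule.lie_mem_lie hr (LieSubmodule.mem_top b)))
    exact (Submodule.Quotient.mk_eq_zero _).2 hrb
  stem := by
    rintro ⟨r⟩ hr
    obtain ⟨a, ha, x, hx, rfl⟩ := (LieSubmodule.mem_sup _ _ _).1 (hX.eq_sup.le hr)
    have hax : X.quotMk (a + x) = X.quotMk a :=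
      (Submodule.Quotient.eq _).2 (by rwa [add_sub_cancel_left])
    have hrange : LinearMap.range (X.quotMk : F →ₗ[K] F ⧸ X) = ⊤ := Submodule.range_mkQ _
    have hmap := map_derivedSeries_one_of_range_sup_center_eq_top X.quotMk
      (by rw [hrange, top_sup_eq])
    exact hmap.le ⟨a, ha.2, hax.symm⟩

/-- A stem extension is maximal if the dimension of its kernel is maximal among all stem
extensions; dimensions are compared as cardinals. -/
def IsMaximal (E : StemExtension K L) : Prop :=
  ∀ E' : StemExtension K L, Module.rank K E'.γ.ker ≤ Module.rank K E.γ.ker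

variable {E : StemExtension K L} [FiniteDimensional K E.γ.ker]

theorem IsMaximal.finiteDimensional_ker (hE : E.IsMaximal) (E' : StemExtension K L) :
    FiniteDimensional K E'.γ.ker :=
  Module.rank_lt_aleph0_iff.1 ((hE E').trans_lt (Module.rank_lt_aleph0 K E.γ.ker))

theorem IsMaximal.finrank_ker_le (hE : E.IsMaximal) (E' : StemExtension K L) :
    Module.finrank K E'.γ.ker ≤ Module.finrank K E.γ.ker :=
  Cardinal.toNat_le_toNat (hE E') (Module.rank_lt_aleph0 K E.γ.ker)

variable {F : Type v} [LieRing F] [LieAlgebra K F] {σ : F →ₗ⁅K⁆ E.T}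

theorem IsMaximal.inf_ker_eq_inf_of_isStemDenominator (hE : E.IsMaximal)
    (hσ : Function.Surjective (E.γ.comp σ)) {X : LieIdeal K F}
    (hX : IsStemDenominator_s11 (E.γ.comp σ).ker X) :
    (E.γ.comp σ).ker ⊓ LieAlgebra.derivedSeries K F 1 ⊓ σ.ker =
      (E.γ.comp σ).ker ⊓ LieAlgebra.derivedSeries K F 1 ⊓ X := by
  let C := (E.γ.comp σ).ker ⊓ LieAlgebra.derivedSeries K F 1
  let E' := ofStemDenominator hσ hX
  let p : F →ₗ⁅K⁆ E'.T := X.quotMk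
  have hp : p.ker = X := LieSubmodule.toSubmodule_injective X.toSubmodule.ker_mkQ
  have hmapσ : C.toSubmodule.map (σ : F →ₗ[K] E.T) = E.γ.ker.toSubmodule :=
    E.map_ker_comp_inf_derivedSeries_one hσ
  have hmapp : C.toSubmodule.map (p : F →ₗ[K] E'.T) = E'.γ.ker.toSubmodule :=
    E'.map_ker_comp_inf_derivedSeries_one hσ
  have hfin : FiniteDimensional K E'.γ.ker.toSubmodule := hE.finiteDimensional_ker E'
  rw [← hmapp] at hfin
  have hinf := inf_ker_eq_inf_ker_of_finrank_map_le
    (σ : F →ₗ[K] E.T) (p : F →ₗ[K] E'.T) C.toSubmodule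
    (fun x hx => lie_top_le_ker_of_ker_le_center E.central σ (hX.inf_eq.le ⟨hx.1.2, hp.le hx.2⟩))
    (by rw [hmapσ, hmapp]; exact hE.finrank_ker_le E')
  rw [← hp]
  exact LieSubmodule.toSubmodule_injective hinf.symm

theorem IsMaximal.isStemDenominator_ker (hE : E.IsMaximal)
    (hσ : Function.Surjective (E.γ.comp σ)) :
    IsStemDenominator_s11 (E.γ.comp σ).ker σ.ker := by
  have hker : σ.ker ≤ (E.γ.comp σ).ker := LinearMap.ker_le_ker_comp _ _
  refine ⟨hker, le_antisymm (fun r hr => ?_) (sup_le inf_le_left hker), ?_⟩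
  · obtain ⟨a, ha, hσa⟩ := (E.map_ker_comp_inf_derivedSeries_one hσ).ge hr
    refine (LieSubmodule.mem_sup _ _ _).2 ⟨a, ha, r - a, ?_, add_sub_cancel a r⟩
    rw [LieHom.mem_ker, map_sub, sub_eq_zero]
    exact hσa.symm
  · obtain ⟨X, hX⟩ := exists_isStemDenominator (E.γ.comp σ).ker
    have hinf := hE.inf_ker_eq_inf_of_isStemDenominator hσ hX
    rw [inf_comm (E.γ.comp σ).ker, inf_assoc, inf_assoc, inf_eq_right.2 hker,
      inf_eq_right.2 hX.le] at hinf
    exact hinf.trans hX.inf_eq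

end StemExtension

theorem stmt_11_general {K L ι : Type u} [Field K] [LieRing L] [LieAlgebra K L]
    (π : FreeLieAlgebra K ι →ₗ⁅K⁆ L) (hπ : Function.Surjective π)
    (E : StemExtension K L) [FiniteDimensional K E.γ.ker] (hE : E.IsMaximal) :
    ∃ X : LieIdeal K (FreeLieAlgebra K ι), IsStemDenominator_s11 π.ker X ∧
      ∃ f : (FreeLieAlgebra K ι ⧸ X) ≃ₗ⁅K⁆ E.T,
        ∀ b : FreeLieAlgebra K ι, E.γ (f (X.quotMk b)) = π b := by
  obtain ⟨σ, rfl⟩ := exists_freeLieAlgebra_lift E.surj π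
  refine ⟨σ.ker, hE.isStemDenominator_ker hπ,
    LieEquiv.ofBijective (quotientLieLift σ σ.ker le_rfl) ⟨?_, ?_⟩, fun _ => rfl⟩
  · exact LinearMap.ker_eq_bot.1 (Submodule.ker_liftQ_eq_bot _ _ _ le_rfl)
  · exact fun t => (E.surjective_of_surjective_comp hπ t).imp' σ.ker.quotMk fun _ h => h

/-- **Theorem 2.8, purely even case.**
Let `L` be a finite-dimensional Lie algebra over a field of characteristic
different from `2` and `3` and let `0 → R → F → L → 0` be a free presentation
of `L`.  Then every maximal stem extension `0 → M → C → L → 0` of `L` is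
isomorphic, as an extension, to a stem deformation of this presentation: there
exist a stem denominator `X` of the presentation and a Lie algebra isomorphism
`f : F/X ≃ C` with `γ ∘ f = π̄`. -/
theorem stmt_11 (K : Type u) [Field K] (h2 : (2 : K) ≠ 0) (h3 : (3 : K) ≠ 0)
    (L : Type u) [LieRing L] [LieAlgebra K L] [FiniteDimensional K L]
    (ι : Type u)
    (π : FreeLieAlgebra K ι →ₗ⁅K⁆ L) (hπ : Function.Surjective π)
    (R : LieIdeal K (FreeLieAlgebra K ι)) (hR : π.ker = R)
    (E : StemExtension K L)
    (hmax : ∀ E' : StemExtension K L, Module.rank K E'.γ.ker ≤ Module.rank K E.γ.ker) :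
    ∃ X : LieIdeal K (FreeLieAlgebra K ι),
      ⁅R, (⊤ : LieIdeal K (FreeLieAlgebra K ι))⁆ ≤ X ∧ X ≤ R ∧
      R = (R ⊓ LieAlgebra.derivedSeries K (FreeLieAlgebra K ι) 1) ⊔ X ∧
      LieAlgebra.derivedSeries K (FreeLieAlgebra K ι) 1 ⊓ X =
        ⁅R, (⊤ : LieIdeal K (FreeLieAlgebra K ι))⁆ ∧
      ∃ f : (FreeLieAlgebra K ι ⧸ X) ≃ₗ⁅K⁆ E.T,
        ∀ b : FreeLieAlgebra K ι, E.γ (f (X.quotMk b)) = π b := by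
  have := E.finiteDimensional_ker
  obtain ⟨X, hX, f, hf⟩ := stmt_11_general π hπ E hmax
  exact hR ▸ ⟨X, hX.lie_top_le, hX.le, hX.eq_sup, hX.inf_eq, f, hf⟩
end
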